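/- Let B₁, B₂ be real-valued functions on the primes with B₁(p), B₂(p) ∈ [−1,1] for all primes p, satisfying the pair Sato-Tate equidistribution hypothesis: for all closed intervals I₁, I₂ ⊆ [−1,1], the set {p prime : B₁(p) ∈ I₁ and B₂(p) ∈ I₂} has natural density μ_ST(I₁)·μ_ST(I₂). Define cᵢ(p) = (1 − 2√p·Bᵢ(p))/p for i = 1,2. Then for any set E of primes whose upper natural density limsup_{x→∞} #{p ∈ E : p ≤ x}/π(x) is strictly less than 1/2, there exist infinitely many primes p ∉ E with c₁(p)·c₂(p) < 0; in particular, c₁(p) and c₂(p) cannot have the same sign for all primes p outside E. -/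

import Mathlib

/-!
Fix `L` strictly between the upper density of `E` and `1/2`, and `ε > 0`. The two boxes
`B₁ ∈ [ε, 1], B₂ ∈ [-1, 0]` and `B₁ ∈ [-1, 0], B₂ ∈ [ε, 1]` are disjoint, and each has density
`muST ε 1 * muST (-1) 0 = muST ε 1 / 2`. Their total density `muST ε 1` exceeds `L` once `ε` is
small, because `muST ε 1 ≥ 1/2 - ε` (`muST_eps`). For `p > 1 / (2ε)²`, a prime in either box has
`c₁ p * c₂ p < 0` (`mul_neg_of_box`). If only finitely many primes outside `E` had this property,
all but finitely many primes in the boxes would lie in `E`; since `π(x) → ∞` the finite exceptional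
set is negligible, and the upper density of `E` would be at least `muST ε 1 > L`.
-/

open scoped Classical
open Filter

/-- The prime counting function `π(x)`: the number of primes `≤ x`. -/
noncomputable def primePi (x : ℕ) : ℕ := ((Finset.range (x + 1)).filter Nat.Prime).card

/-- The number of primes `p ≤ x` lying in the set `S`. -/
noncomputable def primeCount (S : Set ℕ) (x : ℕ) : ℕ :=
  ((Finset.range (x + 1)).filter (fun p => p.Prime ∧ p ∈ S)).card

/-- A set `S` of primes has natural density `δ` if `#{p ∈ S : p ≤ x}/π(x) → δ`. -/
def HasPrimeDensity (S : Set ℕ) (δ : ℝ) : Prop :=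
  Filter.Tendsto (fun x : ℕ => (primeCount S x : ℝ) / (primePi x : ℝ)) Filter.atTop (nhds δ)

/-- The Sato–Tate measure of the interval `[a,b]`: `(2/π)∫_a^b √(1-t²) dt`. -/
noncomputable def muST (a b : ℝ) : ℝ := (2 / Real.pi) * ∫ t in a..b, Real.sqrt (1 - t ^ 2)

theorem intervalIntegrable_semicircle (a b : ℝ) :
    IntervalIntegrable (fun t : ℝ => Real.sqrt (1 - t ^ 2)) MeasureTheory.volume a b :=
  (by fun_prop : Continuous fun t : ℝ => Real.sqrt (1 - t ^ 2)).intervalIntegrable a b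

theorem integral_semicircle_neg_half :
    ∫ t in (-1 : ℝ)..0, Real.sqrt (1 - t ^ 2) = ∫ t in (0 : ℝ)..1, Real.sqrt (1 - t ^ 2) := by
  have h := intervalIntegral.integral_comp_neg (a := 0) (b := 1)
    (fun t : ℝ => Real.sqrt (1 - t ^ 2))
  simp only [neg_sq, neg_zero] at h
  exact h.symm

theorem integral_semicircle_half :
    ∫ t in (0 : ℝ)..1, Real.sqrt (1 - t ^ 2) = Real.pi / 4 := by
  have h := intervalIntegral.integral_add_adjacent_intervals
    (intervalIntegrable_semicircle (-1) 0) (intervalIntegrable_semicircle 0 1)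
  rw [integral_semicircle_neg_half, integral_sqrt_one_sub_sq] at h
  linarith

theorem muST_neg_half : muST (-1) 0 = 1 / 2 := by
  unfold muST
  rw [integral_semicircle_neg_half, integral_semicircle_half]
  have := Real.pi_pos
  field_simp
  norm_num

theorem muST_eps (ε : ℝ) (hε : 0 ≤ ε) : 1 / 2 - ε ≤ muST ε 1 := by
  have h := intervalIntegral.integral_add_adjacent_intervals
    (intervalIntegrable_semicircle 0 ε) (intervalIntegrable_semicircle ε 1)
  rw [integral_semicircle_half] at h
  have h2 : ∫ t in (0 : ℝ)..ε, Real.sqrt (1 - t ^ 2) ≤ ∫ _ in (0 : ℝ)..ε, (1 : ℝ) := by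
    refine intervalIntegral.integral_mono_on hε (intervalIntegrable_semicircle 0 ε)
      (by simp) ?_
    intro t _
    exact Real.sqrt_le_iff.mpr ⟨zero_le_one, by nlinarith [sq_nonneg t]⟩
  simp only [intervalIntegral.integral_const, sub_zero, smul_eq_mul, mul_one] at h2
  have hpi := Real.pi_gt_three
  have h3 : Real.pi / 4 - ε ≤ ∫ t in ε..1, Real.sqrt (1 - t ^ 2) := by linarith
  unfold muST
  calc 1 / 2 - ε ≤ 2 / Real.pi * (Real.pi / 4 - ε) := by
        have e : 2 / Real.pi * (Real.pi / 4 - ε) = 1 / 2 - 2 / Real.pi * ε := by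
          field_simp
          ring
        have : 2 / Real.pi ≤ 1 := by rw [div_le_one (by linarith)]; linarith
        rw [e]
        nlinarith
    _ ≤ _ := by gcongr

theorem tendsto_primePi : Tendsto (fun x : ℕ => (primePi x : ℝ)) atTop atTop := by
  have e : ∀ x, primePi x = Nat.primeCounting x := by
    intro x
    rw [primePi, Nat.primeCounting, Nat.primeCounting', Nat.count_eq_card_filter_range]
  simp only [e]
  exact tendsto_natCast_atTop_atTop.comp Nat.tendsto_primeCounting

theorem primeCount_le (S : Set ℕ) (x : ℕ) : primeCount S x ≤ primePi x := by
  refine Finset.card_le_card ?_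
  intro p hp
  simp only [Finset.mem_filter] at hp ⊢
  exact ⟨hp.1, hp.2.1⟩

/-- If all primes `≥ N` of the disjoint sets `S` and `T` lie in `E`, then counting primes in `S` and
`T` overshoots the count for `E` only by primes below `N`, of which there are at most `N`. -/
theorem primeCount_add_le (S T E : Set ℕ) (N : ℕ) (hd : Disjoint S T)
    (h : ∀ p : ℕ, p.Prime → N ≤ p → p ∈ S ∪ T → p ∈ E) (x : ℕ) :
    primeCount S x + primeCount T x ≤ primeCount E x + N := by
  unfold primeCount
  rw [← Finset.card_union_of_disjoint]
  · calc _ ≤ (((Finset.range (x + 1)).filter (fun p => p.Prime ∧ p ∈ E)) ∪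
          Finset.range N).card := by
          refine Finset.card_le_card ?_
          intro p hp
          simp only [Finset.mem_union, Finset.mem_filter, Finset.mem_range] at hp ⊢
          rcases lt_or_ge p N with hN | hN
          · exact Or.inr hN
          · left
            rcases hp with ⟨h1, h2, h3⟩ | ⟨h1, h2, h3⟩
            · exact ⟨h1, h2, h p h2 hN (Or.inl h3)⟩
            · exact ⟨h1, h2, h p h2 hN (Or.inr h3)⟩
      _ ≤ _ := by
          refine (Finset.card_union_le _ _).trans ?_
          simp
  · rw [Finset.disjoint_left]
    intro p hp hq
    simp only [Finset.mem_filter] at hp hq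
    exact Set.disjoint_left.mp hd hp.2.2 hq.2.2

/-- Once `2ε√p > 1`, the sign of `1 - 2√p·B` is negative for `B ≥ ε` and positive for `B ≤ 0`. -/
theorem mul_neg_of_box (p : ℕ) (hp : p.Prime) (ε b b' : ℝ) (hε : 0 < ε)
    (hlarge : (1 / (2 * ε)) ^ 2 < p) (hb : ε ≤ b) (hb' : b' ≤ 0) :
    (1 - 2 * Real.sqrt p * b) / p * ((1 - 2 * Real.sqrt p * b') / p) < 0 := by
  have hp0 : (0 : ℝ) < p := by exact_mod_cast hp.pos
  have hs : 1 / (2 * ε) < Real.sqrt p := Real.lt_sqrt_of_sq_lt hlarge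
  rw [div_lt_iff₀ (by linarith)] at hs
  have hs0 := Real.sqrt_nonneg (p : ℝ)
  refine mul_neg_of_neg_of_pos (div_neg_of_neg_of_pos ?_ hp0) (div_pos ?_ hp0)
  · nlinarith
  · nlinarith

theorem stmt_8 (B₁ B₂ c₁ c₂ : ℕ → ℝ)
    (hB₁ : ∀ p : ℕ, p.Prime → B₁ p ∈ Set.Icc (-1 : ℝ) 1)
    (hB₂ : ∀ p : ℕ, p.Prime → B₂ p ∈ Set.Icc (-1 : ℝ) 1)
    (hST : ∀ a₁ b₁ a₂ b₂ : ℝ, -1 ≤ a₁ → a₁ ≤ b₁ → b₁ ≤ 1 → -1 ≤ a₂ → a₂ ≤ b₂ → b₂ ≤ 1 →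
      HasPrimeDensity {p | B₁ p ∈ Set.Icc a₁ b₁ ∧ B₂ p ∈ Set.Icc a₂ b₂}
        (muST a₁ b₁ * muST a₂ b₂))
    (hc₁ : ∀ p : ℕ, p.Prime → c₁ p = (1 - 2 * Real.sqrt p * B₁ p) / p)
    (hc₂ : ∀ p : ℕ, p.Prime → c₂ p = (1 - 2 * Real.sqrt p * B₂ p) / p)
    (E : Set ℕ)
    (hE : Filter.limsup (fun x : ℕ => (primeCount E x : ℝ) / (primePi x : ℝ))
        Filter.atTop < 1 / 2) :
    {p : ℕ | p.Prime ∧ p ∉ E ∧ c₁ p * c₂ p < 0}.Infinite := by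
  obtain ⟨L, hL1, hL2⟩ := exists_between hE
  have hbdd : IsBoundedUnder (· ≤ ·) atTop
      (fun x : ℕ => (primeCount E x : ℝ) / (primePi x : ℝ)) := by
    refine isBoundedUnder_of ⟨1, fun x => ?_⟩
    exact div_le_one_of_le₀ (by exact_mod_cast primeCount_le E x) (by positivity)
  have hev := eventually_lt_of_limsup_lt hL1 hbdd
  have hL0 : 0 < L := by
    obtain ⟨x, hx⟩ := hev.exists
    exact lt_of_le_of_lt (by positivity) hx
  -- With this `ε`, `muST_eps` gives `muST ε 1 ≥ 1/2 - ε = L + ε > L`.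
  set ε : ℝ := (1 / 2 - L) / 2 with hεdef
  have hε : 0 < ε := by rw [hεdef]; linarith
  have hε1 : ε ≤ 1 := by rw [hεdef]; linarith
  have hS := hST ε 1 (-1) 0 (by linarith) hε1 le_rfl le_rfl (by norm_num) (by norm_num)
  have hT := hST (-1) 0 ε 1 le_rfl (by norm_num) (by norm_num) (by linarith) hε1 le_rfl
  set S := {p | B₁ p ∈ Set.Icc ε 1 ∧ B₂ p ∈ Set.Icc (-1) 0}
  set T := {p | B₁ p ∈ Set.Icc (-1) 0 ∧ B₂ p ∈ Set.Icc ε 1}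
  have hd : Disjoint S T := by
    rw [Set.disjoint_left]
    intro p hp hq
    linarith [hp.1.1, hq.1.2]
  intro hfin
  obtain ⟨M, hM⟩ := hfin.bddAbove
  obtain ⟨K, hK⟩ := exists_nat_gt ((1 / (2 * ε)) ^ 2)
  have hcount := primeCount_add_le S T E (M + K + 1) hd (by
    intro p hp hpN hpST
    by_contra hpE
    have hlarge : (1 / (2 * ε)) ^ 2 < (p : ℝ) :=
      hK.trans_le (by exact_mod_cast (by omega : K ≤ p))
    have hneg : c₁ p * c₂ p < 0 := by
      rw [hc₁ p hp, hc₂ p hp]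
      rcases hpST with h | h
      · exact mul_neg_of_box p hp ε _ _ hε hlarge h.1.1 h.2.2
      · rw [mul_comm]
        exact mul_neg_of_box p hp ε _ _ hε hlarge h.2.1 h.1.2
    have := hM ⟨hp, hpE, hneg⟩
    omega)
  have hN : Tendsto (fun x : ℕ => ((M + K + 1 : ℕ) : ℝ) / (primePi x : ℝ)) atTop (nhds 0) :=
    tendsto_primePi.const_div_atTop _
  unfold HasPrimeDensity at hS hT
  have hlim := (hS.add hT).sub hN
  have hle := le_of_tendsto hlim (b := L) (by
    filter_upwards [hev] with x hx
    have h : (primeCount S x : ℝ) + primeCount T x ≤ primeCount E x + (M + K + 1 : ℕ) := by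
      exact_mod_cast hcount x
    have h' := div_le_div_of_nonneg_right h (Nat.cast_nonneg (α := ℝ) (primePi x))
    rw [add_div, add_div] at h'
    linarith)
  rw [muST_neg_half] at hle
  have := muST_eps ε hε.le
  linarith
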